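/- Let (R, m, k) be a commutative Noetherian local ring and L a finitely generated R-module such that m · (L ⊗_R L) = 0. Then the antisymmetrization map ι_L : Λ^2_R(L) → L ⊗_R L, defined on elementary wedges by x ∧ y ↦ x ⊗ y − y ⊗ x, is injective. -/

import Mathlib

/-!
Write `k` for the residue field. A lift `e₁, …, eₙ` of a `k`-basis of `k ⊗ L` generates `L` by
Nakayama's lemma, so every `z : L ⊗ L` is `∑ aᵢⱼ eᵢ ⊗ eⱼ`. The coordinate functionals `L → k`
dual to the `eᵢ` show that `z` determines its coefficients modulo `m`, so the vanishing of
the antisymmetrization of `z` forces `aᵢⱼ - aⱼᵢ ∈ m`. As `m` kills `L ⊗ L`, the coefficients may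
be treated as symmetric; then in `Λ²` the terms `(i, j)` and `(j, i)` of `∑ aᵢⱼ eᵢ ∧ eⱼ` cancel,
and the diagonal terms are zero.
-/

/-!
STATEMENT 17: Let (R, m, k) be a commutative Noetherian local ring and L a finitely generated
R-module such that m · (L ⊗_R L) = 0. Then the antisymmetrization map
ι_L : Λ²_R(L) → L ⊗_R L, x ∧ y ↦ x ⊗ y − y ⊗ x, is injective.
-/

open TensorProduct

universe u

variable (R : Type u) [CommRing R] (M : Type u) [AddCommGroup M] [Module R M]

/-- The submodule of `M ⊗[R] M` generated by the squares `x ⊗ x`. -/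
noncomputable def wedgeRel : Submodule R (M ⊗[R] M) :=
  Submodule.span R {z | ∃ x : M, z = x ⊗ₜ[R] x}

/-- The second exterior power `Λ²_R(M)`, realized as `(M ⊗[R] M) / ⟨x ⊗ x⟩`.
The class of `x ⊗ y` is the elementary wedge `x ∧ y`. -/
noncomputable abbrev ExteriorSquare : Type u := (M ⊗[R] M) ⧸ wedgeRel R M

/-- `x ⊗ y ↦ x ⊗ y - y ⊗ x` as an endomorphism of `M ⊗[R] M`. -/
noncomputable def antisymAux : M ⊗[R] M →ₗ[R] M ⊗[R] M :=
  LinearMap.id - (TensorProduct.comm R M M).toLinearMap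

lemma wedgeRel_le_ker : wedgeRel R M ≤ LinearMap.ker (antisymAux R M) := by
  rw [wedgeRel, Submodule.span_le]
  rintro z ⟨x, rfl⟩
  simp [antisymAux]

/-- The antisymmetrization map `ι_M : Λ²_R(M) → M ⊗_R M`, `x ∧ y ↦ x ⊗ y - y ⊗ x`. -/
noncomputable def antisymmetrization : ExteriorSquare R M →ₗ[R] M ⊗[R] M :=
  Submodule.liftQ (wedgeRel R M) (antisymAux R M) (wedgeRel_le_ker R M)

/-- A finite module over a local ring has a finite generating family with dual functionals valued in
the residue field. -/
lemma exists_generators_residue_dual {R : Type u} [CommRing R] [IsLocalRing R]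
    (L : Type u) [AddCommGroup L] [Module R L] [Module.Finite R L] :
    ∃ (n : ℕ) (e : Fin n → L) (φ : Fin n → L →ₗ[R] IsLocalRing.ResidueField R),
      Submodule.span R (Set.range e) = ⊤ ∧ ∀ i j, φ i (e j) = if j = i then 1 else 0 := by
  let k := IsLocalRing.ResidueField R
  let b := Module.finBasis k (k ⊗[R] L)
  have hs : Function.Surjective (TensorProduct.mk R k L 1) :=
    TensorProduct.mk_surjective R L k IsLocalRing.residue_surjective
  choose e he using fun i => hs (b i)
  refine ⟨_, e, fun i => (b.coord i).restrictScalars R ∘ₗ TensorProduct.mk R k L 1,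
    IsLocalRing.span_eq_top_of_tmul_eq_basis e b he, fun i j => ?_⟩
  rw [LinearMap.comp_apply, he j]
  simp [Finsupp.single_apply]

lemma exists_sum_tmul {R : Type u} [CommRing R] {L : Type u} [AddCommGroup L] [Module R L]
    {n : ℕ} {e : Fin n → L} (he : Submodule.span R (Set.range e) = ⊤) (z : L ⊗[R] L) :
    ∃ a : Fin n × Fin n → R, ∑ p, a p • (e p.1 ⊗ₜ[R] e p.2) = z := by
  rw [← Submodule.mem_span_range_iff_exists_fun R (v := fun p : Fin n × Fin n =>
    e p.1 ⊗ₜ[R] e p.2)]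
  have h := TensorProduct.map₂_mk_top_top_eq_top R L L
  rw [← he, Submodule.map₂_span_span, Set.image2_range] at h
  exact h ▸ Submodule.mem_top

theorem stmt_17 [IsNoetherianRing R] [IsLocalRing R]
    (L : Type u) [AddCommGroup L] [Module R L] [Module.Finite R L]
    (hL : IsLocalRing.maximalIdeal R • (⊤ : Submodule R (L ⊗[R] L)) = ⊥) :
    Function.Injective (antisymmetrization R L) := by
  rw [← LinearMap.ker_eq_bot, Submodule.eq_bot_iff]
  intro w hw
  obtain ⟨z, rfl⟩ := Submodule.mkQ_surjective _ w
  replace hw : antisymAux R L z = 0 := hw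
  obtain ⟨n, e, φ, he, hφ⟩ := exists_generators_residue_dual (R := R) L
  obtain ⟨a, rfl⟩ := exists_sum_tmul he z
  have kill : ∀ r ∈ IsLocalRing.maximalIdeal R, ∀ t : L ⊗[R] L, r • t = 0 := fun r hr t => by
    have h := Submodule.smul_mem_smul hr (Submodule.mem_top (x := t))
    rwa [hL, Submodule.mem_bot] at h
  have symm : ∀ i j, a (i, j) - a (j, i) ∈ IsLocalRing.maximalIdeal R := fun i j => by
    -- Apply the functional `x ⊗ y ↦ φ i x * φ j y`, which reads off the residue of the
    -- `(i, j)` coefficient.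
    have h := congrArg (LinearMap.mul' R (IsLocalRing.ResidueField R) ∘ₗ
      TensorProduct.map (φ i) (φ j)) hw
    simp only [antisymAux, map_sum, map_smul, map_zero, LinearMap.sub_apply, LinearMap.id_apply,
      LinearEquiv.coe_coe, TensorProduct.comm_tmul, LinearMap.comp_apply, map_sub,
      TensorProduct.map_tmul, LinearMap.mul'_apply, hφ, Fintype.sum_prod_type, smul_sub,
      Finset.sum_sub_distrib] at h
    rw [← IsLocalRing.residue_eq_zero_iff, map_sub]
    simpa [Algebra.smul_def] using h
  have swap : ∀ x y : L, (wedgeRel R L).mkQ (x ⊗ₜ y) = -(wedgeRel R L).mkQ (y ⊗ₜ x) := by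
    intro x y
    have hsq : ∀ x : L, (wedgeRel R L).mkQ (x ⊗ₜ x) = 0 := fun x =>
      (Submodule.Quotient.mk_eq_zero _).2 (Submodule.subset_span ⟨x, rfl⟩)
    have h := hsq (x + y)
    simp only [TensorProduct.add_tmul, TensorProduct.tmul_add, map_add, hsq, zero_add,
      add_zero] at h
    exact eq_neg_of_add_eq_zero_right h
  rw [map_sum]
  refine Finset.sum_involution (fun p _ => p.swap) ?_ ?_ (fun _ _ => Finset.mem_univ _)
    (fun p _ => p.swap_swap)
  · rintro ⟨i, j⟩ -
    have h := congrArg (wedgeRel R L).mkQ (kill _ (symm i j) (e i ⊗ₜ e j))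
    rw [map_smul, map_zero, sub_smul] at h
    rw [map_smul, map_smul]
    simpa [swap (e j) (e i), ← sub_eq_add_neg] using h
  · rintro ⟨i, j⟩ - hne hij
    obtain rfl : j = i := congrArg Prod.fst hij
    exact hne ((Submodule.Quotient.mk_eq_zero _).2
      (Submodule.smul_mem _ _ (Submodule.subset_span ⟨e j, rfl⟩)))
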